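/- Suppose p = m, f₀ and h₀ are twice continuously differentiable, assumptions (A2), (A4), (A5) hold, and the reachability assumption holds: for every x̃ ∈ ℝⁿ, yʳ ∈ 𝒵ˢ_{y,lin}(x̃), so that the minimizer of ‖yˢ − yʳ‖_S² over 𝒵ˢ_{y,lin}(x̃) is yʳ itself and the associated steady state is (xˢʳ_lin(x̃), uˢʳ_lin(x̃)) = M_x̃^{−1}·(−e_x̃ ; yʳ − r_x̃) with M_x̃ := [A_x̃ − I, B; C_x̃, D]. Let (xˢʳ,uˢʳ) ∈ 𝒵ˢ be a nonlinear steady state with h(xˢʳ,uˢʳ) = yʳ. Then for every compact set X ⊂ ℝⁿ with ℬ ⊆ X×𝕌 there exist constants c_{eq,1}, c_{eq,2} > 0 such that for all x̂ ∈ X: c_{eq,1}‖x̂ − xˢʳ_lin(x̂)‖₂² ≤ ‖x̂ − xˢʳ‖₂² ≤ c_{eq,2}‖x̂ − xˢʳ_lin(x̂)‖₂². -/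

import Mathlib

open Matrix

noncomputable section

def en {k : ℕ} (x : Fin k → ℝ) : ℝ := Real.sqrt (∑ i, x i ^ 2)

def qn {k : ℕ} (P : Matrix (Fin k) (Fin k) ℝ) (x : Fin k → ℝ) : ℝ :=
  x ⬝ᵥ P.mulVec x

def jac {n q : ℕ} (g : (Fin n → ℝ) → Fin q → ℝ) (xt : Fin n → ℝ) :
    Matrix (Fin q) (Fin n) ℝ :=
  LinearMap.toMatrix' (fderiv ℝ g xt).toLinearMap

def fdyn {n m : ℕ} (f0 : (Fin n → ℝ) → Fin n → ℝ) (B : Matrix (Fin n) (Fin m) ℝ)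
    (x : Fin n → ℝ) (u : Fin m → ℝ) : Fin n → ℝ :=
  f0 x + B.mulVec u

def hout {n p m : ℕ} (h0 : (Fin n → ℝ) → Fin p → ℝ) (D : Matrix (Fin p) (Fin m) ℝ)
    (x : Fin n → ℝ) (u : Fin m → ℝ) : Fin p → ℝ :=
  h0 x + D.mulVec u

def flin {n m : ℕ} (f0 : (Fin n → ℝ) → Fin n → ℝ) (B : Matrix (Fin n) (Fin m) ℝ)
    (xt x : Fin n → ℝ) (u : Fin m → ℝ) : Fin n → ℝ :=
  (jac f0 xt).mulVec x + B.mulVec u + (f0 xt - (jac f0 xt).mulVec xt)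

def hlin {n p m : ℕ} (h0 : (Fin n → ℝ) → Fin p → ℝ) (D : Matrix (Fin p) (Fin m) ℝ)
    (xt x : Fin n → ℝ) (u : Fin m → ℝ) : Fin p → ℝ :=
  (jac h0 xt).mulVec x + D.mulVec u + (h0 xt - (jac h0 xt).mulVec xt)

def Zlin {n m : ℕ} (f0 : (Fin n → ℝ) → Fin n → ℝ) (B : Matrix (Fin n) (Fin m) ℝ)
    (Us : Set (Fin m → ℝ)) (xt : Fin n → ℝ) : Set ((Fin n → ℝ) × (Fin m → ℝ)) :=
  {z | z.2 ∈ Us ∧ z.1 = flin f0 B xt z.1 z.2}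

def Zs {n m : ℕ} (f0 : (Fin n → ℝ) → Fin n → ℝ) (B : Matrix (Fin n) (Fin m) ℝ)
    (Us : Set (Fin m → ℝ)) : Set ((Fin n → ℝ) × (Fin m → ℝ)) :=
  {z | z.2 ∈ Us ∧ z.1 = fdyn f0 B z.1 z.2}

def A2holds {n m p : ℕ} (f0 : (Fin n → ℝ) → Fin n → ℝ) (h0 : (Fin n → ℝ) → Fin p → ℝ)
    (B : Matrix (Fin n) (Fin m) ℝ) (D : Matrix (Fin p) (Fin m) ℝ) (σs : ℝ) : Prop :=
  ∀ (xt v : Fin n → ℝ) (w : Fin m → ℝ),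
    σs * Real.sqrt (en v ^ 2 + en w ^ 2) ≤
      Real.sqrt (en ((jac f0 xt).mulVec v - v + B.mulVec w) ^ 2 +
        en ((jac h0 xt).mulVec v + D.mulVec w) ^ 2)

def A3holds {n m : ℕ} (f0 : (Fin n → ℝ) → Fin n → ℝ) (B : Matrix (Fin n) (Fin m) ℝ)
    (μ : ℝ) : Prop :=
  ∀ (xt w : Fin n → ℝ),
    μ * en w ≤ Real.sqrt (∑ k ∈ Finset.range n, en ((jac f0 xt ^ k * B)ᵀ.mulVec w) ^ 2)

def A4holds {n : ℕ} (f0 : (Fin n → ℝ) → Fin n → ℝ) (σl : ℝ) : Prop :=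
  ∀ xt v : Fin n → ℝ, σl * en v ≤ en (v - (jac f0 xt).mulVec v)

/-!
A Newton step for `g x = y` from `x` to `x'` satisfies `Dg(x) (x - x') = g x - y`, and `y = g x⋆`
at a solution `x⋆`. If `Dg` is bounded below everywhere and the dimensions agree, then Hadamard's
global inverse theorem bounds `g` below by the same constant, so `‖x - x'‖` and `‖x - x⋆‖` are both
comparable with `‖g x - y‖`, uniformly on bounded sets.

Steady states of the linearization at `x` are Newton steps for the equations `f₀ x - x + B u = 0`,
`h₀ x + D u = y`. These are affine in `u`, so the input is eliminated by passing to the quotient by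
the range of `u ↦ (B u, D u)`; the lower bound in (A2) descends to the quotient norm.
-/

open scoped unitInterval NNReal

open Module (finrank)

section Inverse

variable {𝕜 E F : Type*} [NontriviallyNormedField 𝕜] [NormedAddCommGroup E] [NormedSpace 𝕜 E]
  [NormedAddCommGroup F] [NormedSpace 𝕜 F]

theorem isInvertible_of_injective_of_finrank_eq [CompleteSpace 𝕜] [FiniteDimensional 𝕜 E]
    [FiniteDimensional 𝕜 F] {T : E →L[𝕜] F} (hT : Function.Injective T)
    (hdim : finrank 𝕜 E = finrank 𝕜 F) : T.IsInvertible :=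
  ⟨((T : E →ₗ[𝕜] F).linearEquivOfInjective hT hdim).toContinuousLinearEquiv, by ext; rfl⟩

theorem norm_inverse_apply_le {T : E →L[𝕜] F} {K : ℝ≥0} (hT : T.IsInvertible)
    (hK : AntilipschitzWith K T) (w : F) : ‖T.inverse w‖ ≤ K * ‖w‖ := by
  simpa only [hT.self_apply_inverse] using hK.le_mul_norm (map_zero T) (T.inverse w)

theorem contDiff_inverse_fderiv_apply [CompleteSpace E] {f : E → F} {n : WithTop ℕ∞}
    (hf : ContDiff 𝕜 (n + 1) f) (hinv : ∀ z, (fderiv 𝕜 f z).IsInvertible) (w : F) :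
    ContDiff 𝕜 n fun z => (fderiv 𝕜 f z).inverse w := by
  refine ContDiff.clm_apply (contDiff_iff_contDiffAt.2 fun z => ?_) contDiff_const
  exact (hinv z).contDiffAt_map_inverse.comp z (hf.fderiv_right le_rfl).contDiffAt

end Inverse

theorem isLocalHomeomorph_of_isInvertible_fderiv {𝕜 E F : Type*} [RCLike 𝕜]
    [NormedAddCommGroup E] [NormedSpace 𝕜 E] [CompleteSpace E] [NormedAddCommGroup F]
    [NormedSpace 𝕜 F] {f : E → F} {n : WithTop ℕ∞} (hf : ContDiff 𝕜 n f) (hn : n ≠ 0)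
    (hinv : ∀ z, (fderiv 𝕜 f z).IsInvertible) : IsLocalHomeomorph f :=
  IsLocalHomeomorph.mk f fun z => by
    obtain ⟨e, he⟩ := hinv z
    have hz : HasFDerivAt f (e : E →L[𝕜] F) z := he ▸ (hf.differentiable hn z).hasFDerivAt
    exact ⟨hf.contDiffAt.toOpenPartialHomeomorph f hz hn,
      hf.contDiffAt.mem_toOpenPartialHomeomorph_source hz hn, fun _ _ => rfl⟩

theorem lift_endpoint_eq_of_homotopy_endpoint_eq {A X Y : Type*} [TopologicalSpace A]
    [PreconnectedSpace A] [TopologicalSpace X] [TopologicalSpace Y] {p : X → Y}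
    (hp : IsLocalHomeomorph p) (hsep : IsSeparatedMap p) (H : C(I × A, Y))
    (hH : ∀ a a', H (1, a) = H (1, a')) {α : A → C(I, X)} (hα : Continuous fun a => α a 0)
    (hlift : ∀ a t, p (α a t) = H (t, a)) (a a' : A) : α a 1 = α a' 1 := by
  have hcont : Continuous fun q : I × A => α q.2 q.1 :=
    hp.continuous_lift hsep H (funext fun q => hlift q.2 q.1) hα fun a => (α a).continuous
  exact hsep.const_of_comp hp.isLocallyInjective (hcont.comp (Continuous.prodMk_right (1 : I)))
    (fun b b' => by simp only [Function.comp_apply, hlift, hH b b']) a a'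

section GlobalInverse

variable {E F : Type*} [NormedAddCommGroup E] [NormedSpace ℝ E] [NormedAddCommGroup F]
  [NormedSpace ℝ F] {f : E → F} {K : ℝ≥0}

theorem image_eq_add_smul_of_hasDerivWithinAt_inverse (hf : Differentiable ℝ f)
    (hinv : ∀ z, (fderiv ℝ f z).IsInvertible) {w : F} {α : ℝ → E}
    (hα : ∀ t ∈ Set.Icc (0 : ℝ) 1,
      HasDerivWithinAt α ((fderiv ℝ f (α t)).inverse w) (Set.Icc 0 1) t)
    {t : ℝ} (ht : t ∈ Set.Icc (0 : ℝ) 1) : f (α t) = f (α 0) + t • w := by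
  have hderiv : ∀ s ∈ Set.Icc (0 : ℝ) 1,
      HasDerivWithinAt (fun s => f (α s) - s • w) 0 (Set.Icc 0 1) s := by
    intro s hs
    have hfα := (hf (α s)).hasFDerivAt.comp_hasDerivWithinAt s (hα s hs)
    rw [(hinv _).self_apply_inverse] at hfα
    simpa [Function.comp_def, Pi.sub_def] using
      hfα.sub ((hasDerivWithinAt_id s (Set.Icc 0 1)).smul_const w)
  have h := norm_image_sub_le_of_norm_deriv_le_segment' hderiv (C := 0)
    (fun _ _ => norm_zero.le) t ht
  rw [zero_mul, norm_le_zero_iff, zero_smul, sub_zero, sub_sub, sub_eq_zero] at h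
  rw [h, add_comm]

variable [FiniteDimensional ℝ E]

theorem exists_hasDerivWithinAt_Icc_of_bounded {v : E → E} (hv : ContDiff ℝ 1 v) {R : ℝ≥0}
    (hR : ∀ z, ‖v z‖ ≤ R) (z₀ : E) :
    ∃ α : ℝ → E, α 0 = z₀ ∧
      ∀ t ∈ Set.Icc (0 : ℝ) 1, HasDerivWithinAt α (v (α t)) (Set.Icc 0 1) t := by
  obtain ⟨L, hL⟩ := (hv.contDiffOn (s := Metric.closedBall z₀ R)).exists_lipschitzOnWith
    one_ne_zero (convex_closedBall _ _) (isCompact_closedBall _ _)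
  have hpl : IsPicardLindelof (fun _ => v) (0 : I) z₀ R 0 R L :=
    { lipschitzOnWith := fun _ _ => hL
      continuousOn := fun _ _ => continuousOn_const
      norm_le := fun _ _ z _ => hR z
      mul_max_le := by simp }
  exact hpl.exists_eq_forall_mem_Icc_hasDerivWithinAt₀

theorem exists_lift_segment (hf : ContDiff ℝ 2 f) (hinv : ∀ z, (fderiv ℝ f z).IsInvertible)
    (hK : ∀ z, AntilipschitzWith K (fderiv ℝ f z)) (z₀ : E) (w : F) :
    ∃ α : C(I, E), α 0 = z₀ ∧ (∀ t : I, f (α t) = f z₀ + (t : ℝ) • w) ∧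
      ‖α 1 - z₀‖ ≤ K * ‖w‖ := by
  have hbound : ∀ z, ‖(fderiv ℝ f z).inverse w‖ ≤ (K * ‖w‖₊ : ℝ≥0) := fun z =>
    norm_inverse_apply_le (hinv z) (hK z) w
  obtain ⟨α, rfl, hα⟩ := exists_hasDerivWithinAt_Icc_of_bounded
    (contDiff_inverse_fderiv_apply (n := 1) hf hinv w) hbound z₀
  have hcont : ContinuousOn α (Set.Icc 0 1) := fun t ht => (hα t ht).continuousWithinAt
  refine ⟨⟨(Set.Icc 0 1).domRestrict α, hcont.domRestrict⟩, rfl, fun t => ?_, ?_⟩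
  · exact image_eq_add_smul_of_hasDerivWithinAt_inverse (hf.differentiable two_ne_zero) hinv hα t.2
  · exact norm_image_sub_le_of_norm_deriv_le_segment_01' hα fun t _ => hbound (α t)

/-- Lifting the segments from `f x` to `f z'` moves every `x` to a point of the fibre over `f z'`,
continuously in `x`. The fibre is discrete, so all these endpoints agree; starting from `z'` gives
`z'`, and starting from `z` gives a point within `K * ‖f z' - f z‖` of `z`. -/
theorem antilipschitzWith_of_forall_fderiv [FiniteDimensional ℝ F]
    (hdim : finrank ℝ E = finrank ℝ F) (hf : ContDiff ℝ 2 f)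
    (hK : ∀ z, AntilipschitzWith K (fderiv ℝ f z)) : AntilipschitzWith K f := by
  have hinv : ∀ z, (fderiv ℝ f z).IsInvertible := fun z =>
    isInvertible_of_injective_of_finrank_eq (hK z).injective hdim
  refine AntilipschitzWith.of_le_mul_dist fun z z' => ?_
  choose α hα₀ hαf hα₁ using fun x => exists_lift_segment hf hinv hK x (f z' - f x)
  let H : C(I × E, F) := ⟨fun q => f q.2 + (q.1 : ℝ) • (f z' - f q.2), by
    have := hf.continuous
    fun_prop⟩
  have hend : α z 1 = α z' 1 :=
    lift_endpoint_eq_of_homotopy_endpoint_eq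
      (isLocalHomeomorph_of_isInvertible_fderiv hf two_ne_zero hinv) (T2Space.isSeparatedMap f) H
      (by simp [H]) (by simpa only [hα₀] using continuous_id') hαf z z'
  have hz' : α z' 1 = z' := by
    simpa only [sub_self, norm_zero, mul_zero, norm_le_zero_iff, sub_eq_zero] using hα₁ z'
  calc dist z z' = ‖α z 1 - z‖ := by rw [hend, hz', dist_eq_norm_sub']
    _ ≤ K * ‖f z' - f z‖ := hα₁ z
    _ = K * dist (f z) (f z') := by rw [dist_eq_norm_sub']

end GlobalInverse

section QuotientByRange

variable {𝕜 E F U : Type*} [NontriviallyNormedField 𝕜] [NormedAddCommGroup E] [NormedSpace 𝕜 E]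
  [NormedAddCommGroup F] [NormedSpace 𝕜 F] [NormedAddCommGroup U] [NormedSpace 𝕜 U]
  {A : E →L[𝕜] F} {L : U →L[𝕜] F}

theorem antilipschitzWith_mkQL_comp_of_coprod {K : ℝ≥0} (h : AntilipschitzWith K (A.coprod L)) :
    AntilipschitzWith K (L.range.mkQL ∘L A) := by
  have hle : ∀ v u, ‖v‖ ≤ K * ‖A v + L u‖ := fun v u =>
    (norm_fst_le (v, u)).trans (h.le_mul_norm (map_zero _) (v, u))
  refine ContinuousLinearMap.antilipschitz_of_bound _ fun v => ?_
  rcases eq_zero_or_pos K with rfl | hKpos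
  · simpa using hle v 0
  rw [← div_le_iff₀' (NNReal.coe_pos.2 hKpos)]
  refine QuotientAddGroup.le_norm_iff.2 fun z hz => ?_
  obtain ⟨u, hu⟩ := (Submodule.Quotient.eq L.range).1 hz
  rw [div_le_iff₀' (NNReal.coe_pos.2 hKpos), ← add_sub_cancel (A v) z]
  exact hu ▸ hle v u

theorem finrank_quotient_range_of_coprod_injective [FiniteDimensional 𝕜 F]
    (h : Function.Injective (A.coprod L)) (hdim : finrank 𝕜 E + finrank 𝕜 U = finrank 𝕜 F) :
    finrank 𝕜 (F ⧸ L.range) = finrank 𝕜 E := by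
  have hL : Function.Injective L := fun u u' huu' =>
    (Prod.ext_iff.1 (h (a₁ := (0, u)) (a₂ := (0, u')) (by simpa using huu'))).2
  have hrange := LinearMap.finrank_range_of_inj (f := (L : U →ₗ[𝕜] F)) hL
  have hquot := L.range.finrank_quotient_add_finrank
  lia

end QuotientByRange

section Newton

variable {E F : Type*} [NormedAddCommGroup E] [NormedSpace ℝ E] [FiniteDimensional ℝ E]
  [NormedAddCommGroup F] [NormedSpace ℝ F] [FiniteDimensional ℝ F]
  {K : ℝ≥0}

theorem exists_newton_step_comparable {g : E → F} (hdim : finrank ℝ E = finrank ℝ F)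
    (hg : ContDiff ℝ 2 g) (hK : ∀ x, AntilipschitzWith K (fderiv ℝ g x)) (xs : E)
    {X : Set E} (hX : Bornology.IsBounded X) :
    ∃ C : ℝ≥0, ∀ x ∈ X, ∀ x', g x + fderiv ℝ g x (x' - x) = g xs →
      ‖x - x'‖ ≤ C * ‖x - xs‖ ∧ ‖x - xs‖ ≤ C * ‖x - x'‖ := by
  obtain ⟨r, hr, hXr⟩ := hX.subset_ball_lt 0 xs
  obtain ⟨L, hL⟩ := (hg.contDiffOn (s := Metric.closedBall xs r)).exists_lipschitzOnWith
    two_ne_zero (convex_closedBall _ _) (isCompact_closedBall _ _)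
  refine ⟨K * L, fun x hx x' hstep => ?_⟩
  have hstep' : fderiv ℝ g x (x - x') = g x - g xs := by
    rw [← neg_sub x' x, map_neg, ← hstep, sub_add_cancel_left]
  push_cast
  constructor
  · calc ‖x - x'‖ ≤ K * ‖fderiv ℝ g x (x - x')‖ := (hK x).le_mul_norm (map_zero _) _
      _ = K * ‖g x - g xs‖ := by rw [hstep']
      _ ≤ K * (L * ‖x - xs‖) := by
        gcongr
        exact hL.norm_sub_le (Metric.ball_subset_closedBall (hXr hx))
          (Metric.mem_closedBall_self hr.le)
      _ = K * L * ‖x - xs‖ := (mul_assoc _ _ _).symm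
  · have hderiv : ‖fderiv ℝ g x‖ ≤ L := norm_fderiv_le_of_lipschitzOn ℝ
      (Filter.mem_of_superset (Metric.isOpen_ball.mem_nhds (hXr hx)) Metric.ball_subset_closedBall)
      hL
    calc ‖x - xs‖ ≤ K * ‖g x - g xs‖ := by
          simpa only [dist_eq_norm] using
            (antilipschitzWith_of_forall_fderiv hdim hg hK).le_mul_dist x xs
      _ = K * ‖fderiv ℝ g x (x - x')‖ := by rw [hstep']
      _ ≤ K * (L * ‖x - x'‖) := by gcongr; exact (fderiv ℝ g x).le_of_opNorm_le hderiv _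
      _ = K * L * ‖x - x'‖ := (mul_assoc _ _ _).symm

theorem exists_newton_step_comparable_of_input {U : Type*} [NormedAddCommGroup U]
    [NormedSpace ℝ U] {G : E → F} (L : U →L[ℝ] F)
    (hdim : finrank ℝ E + finrank ℝ U = finrank ℝ F) (hG : ContDiff ℝ 2 G)
    (hK : ∀ x, AntilipschitzWith K ((fderiv ℝ G x).coprod L)) {y : F} {xs : E} {us : U}
    (hs : G xs + L us = y) {X : Set E} (hX : Bornology.IsBounded X) :
    ∃ C : ℝ≥0, ∀ x ∈ X, ∀ x' u', G x + fderiv ℝ G x (x' - x) + L u' = y →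
      ‖x - x'‖ ≤ C * ‖x - xs‖ ∧ ‖x - xs‖ ≤ C * ‖x - x'‖ := by
  have : IsClosed (L.range : Set F) := L.range.closed_of_finiteDimensional
  let π := L.range.mkQL
  have hπL : ∀ u, π (L u) = 0 := fun u => (Submodule.Quotient.mk_eq_zero _).2 ⟨u, rfl⟩
  have hderiv : ∀ x, fderiv ℝ (π ∘ G) x = π ∘L fderiv ℝ G x := fun x =>
    (π.hasFDerivAt.comp x (hG.differentiable two_ne_zero x).hasFDerivAt).fderiv
  obtain ⟨C, hC⟩ := exists_newton_step_comparable
    (finrank_quotient_range_of_coprod_injective (hK xs).injective hdim).symm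
    (π.contDiff.comp hG)
    (fun x => hderiv x ▸ antilipschitzWith_mkQL_comp_of_coprod (hK x)) xs hX
  refine ⟨C, fun x hx x' u' hstep => hC x hx x' ?_⟩
  simpa [hderiv, hπL] using congrArg π (hstep.trans hs.symm)

end Newton

section Euclidean

variable {n m p : ℕ}

theorem en_eq_norm_toLp (x : Fin n → ℝ) : en x = ‖WithLp.toLp 2 x‖ := by
  simp only [en, EuclideanSpace.norm_eq, Real.norm_eq_abs, sq_abs]

theorem norm_le_en (x : Fin n → ℝ) : ‖x‖ ≤ en x := by
  rw [en_eq_norm_toLp]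
  exact (pi_norm_le_iff_of_nonneg (norm_nonneg _)).2 fun i =>
    PiLp.norm_apply_le (WithLp.toLp 2 x) i

theorem en_le_sqrt_mul_norm (x : Fin n → ℝ) : en x ≤ √n * ‖x‖ := by
  simpa [en_eq_norm_toLp, Real.sqrt_eq_rpow] using
    (PiLp.lipschitzWith_toLp 2 fun _ : Fin n => ℝ).norm_le_mul rfl x

theorem en_sq_le_of_norm_le {a b : Fin n → ℝ} {C : ℝ≥0} (h : ‖a‖ ≤ C * ‖b‖) :
    en a ^ 2 ≤ n * C ^ 2 * en b ^ 2 := by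
  have hab : en a ≤ √n * (C * en b) := by
    grw [en_le_sqrt_mul_norm, h, norm_le_en b]
  calc en a ^ 2 ≤ (√n * (C * en b)) ^ 2 := pow_le_pow_left₀ (Real.sqrt_nonneg _) hab 2
    _ = n * C ^ 2 * en b ^ 2 := by rw [mul_pow, mul_pow, Real.sq_sqrt n.cast_nonneg, mul_assoc]

theorem norm_prod_le_sqrt_en (v : Fin n → ℝ) (w : Fin m → ℝ) :
    ‖(v, w)‖ ≤ √(en v ^ 2 + en w ^ 2) :=
  max_le
    ((norm_le_en v).trans (Real.le_sqrt_of_sq_le (le_add_of_nonneg_right (sq_nonneg _))))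
    ((norm_le_en w).trans (Real.le_sqrt_of_sq_le (le_add_of_nonneg_left (sq_nonneg _))))

theorem sqrt_en_le_mul_norm_prod (v : Fin n → ℝ) (w : Fin m → ℝ) :
    √(en v ^ 2 + en w ^ 2) ≤ √(n + m) * ‖(v, w)‖ := by
  refine Real.sqrt_le_iff.2 ⟨by positivity, ?_⟩
  have hv : en v ≤ √n * ‖(v, w)‖ := by grw [en_le_sqrt_mul_norm, norm_fst_le (v, w)]
  have hw : en w ≤ √m * ‖(v, w)‖ := by grw [en_le_sqrt_mul_norm, norm_snd_le (v, w)]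
  calc en v ^ 2 + en w ^ 2 ≤ (√n * ‖(v, w)‖) ^ 2 + (√m * ‖(v, w)‖) ^ 2 :=
        add_le_add (pow_le_pow_left₀ (Real.sqrt_nonneg _) hv 2)
          (pow_le_pow_left₀ (Real.sqrt_nonneg _) hw 2)
    _ = (√(n + m) * ‖(v, w)‖) ^ 2 := by
        simp only [mul_pow, Real.sq_sqrt (Nat.cast_nonneg (α := ℝ) _),
          Real.sq_sqrt (add_nonneg n.cast_nonneg (Nat.cast_nonneg (α := ℝ) m)), add_mul]

end Euclidean

section SteadyState

variable {n m p : ℕ} {f0 : (Fin n → ℝ) → Fin n → ℝ} {h0 : (Fin n → ℝ) → Fin p → ℝ}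
  {B : Matrix (Fin n) (Fin m) ℝ} {D : Matrix (Fin p) (Fin m) ℝ}

/-- The state part `x ↦ (f₀ x - x, h₀ x)` of the steady-state equations: `(x, u)` is a steady state
with output `y` iff `zeroInputResidual f0 h0 x + inputMap B D u = (0, y)`. -/
def zeroInputResidual (f0 : (Fin n → ℝ) → Fin n → ℝ) (h0 : (Fin n → ℝ) → Fin p → ℝ)
    (x : Fin n → ℝ) : (Fin n → ℝ) × (Fin p → ℝ) :=
  (f0 x - x, h0 x)

/-- The input part `u ↦ (B u, D u)` of the steady-state equations, a continuous linear map. -/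
def inputMap (B : Matrix (Fin n) (Fin m) ℝ) (D : Matrix (Fin p) (Fin m) ℝ) :
    (Fin m → ℝ) →L[ℝ] (Fin n → ℝ) × (Fin p → ℝ) :=
  (LinearMap.toContinuousLinearMap B.mulVecLin).prod (LinearMap.toContinuousLinearMap D.mulVecLin)

theorem inputMap_apply (u : Fin m → ℝ) : inputMap B D u = (B *ᵥ u, D *ᵥ u) := rfl

theorem jac_mulVec (g : (Fin n → ℝ) → Fin p → ℝ) (x v : Fin n → ℝ) :
    jac g x *ᵥ v = fderiv ℝ g x v :=
  LinearMap.toMatrix'_mulVec _ _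

theorem contDiff_zeroInputResidual {k : WithTop ℕ∞} (hf0 : ContDiff ℝ k f0)
    (hh0 : ContDiff ℝ k h0) : ContDiff ℝ k (zeroInputResidual f0 h0) :=
  (hf0.sub contDiff_id).prodMk hh0

theorem fderiv_zeroInputResidual_apply (hf0 : Differentiable ℝ f0) (hh0 : Differentiable ℝ h0)
    (x v : Fin n → ℝ) :
    fderiv ℝ (zeroInputResidual f0 h0) x v = (jac f0 x *ᵥ v - v, jac h0 x *ᵥ v) := by
  have h : HasFDerivAt (zeroInputResidual f0 h0)
      ((fderiv ℝ f0 x - ContinuousLinearMap.id ℝ _).prod (fderiv ℝ h0 x)) x :=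
    ((hf0 x).hasFDerivAt.sub (hasFDerivAt_id x)).prodMk (hh0 x).hasFDerivAt
  rw [h.fderiv, jac_mulVec, jac_mulVec]
  rfl

theorem zeroInputResidual_add_inputMap_eq_iff {x : Fin n → ℝ} {u : Fin m → ℝ} {y : Fin p → ℝ} :
    zeroInputResidual f0 h0 x + inputMap B D u = (0, y) ↔
      x = fdyn f0 B x u ∧ hout h0 D x u = y := by
  have hstate : f0 x - x + B *ᵥ u = fdyn f0 B x u - x := by
    rw [fdyn]
    abel
  rw [eq_comm (a := x), ← sub_eq_zero (b := x), ← hstate]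
  exact Prod.ext_iff

theorem newton_step_eq_iff_linearized_steadyState (hf0 : Differentiable ℝ f0)
    (hh0 : Differentiable ℝ h0) {x x' : Fin n → ℝ} {u : Fin m → ℝ} {y : Fin p → ℝ} :
    zeroInputResidual f0 h0 x + fderiv ℝ (zeroInputResidual f0 h0) x (x' - x) + inputMap B D u =
        (0, y) ↔
      x' = flin f0 B x x' u ∧ hlin h0 D x x' u = y := by
  have hstate : f0 x - x + (jac f0 x *ᵥ (x' - x) - (x' - x)) + B *ᵥ u =
      flin f0 B x x' u - x' := by
    rw [flin, mulVec_sub]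
    abel
  have houtput : h0 x + jac h0 x *ᵥ (x' - x) + D *ᵥ u = hlin h0 D x x' u := by
    rw [hlin, mulVec_sub]
    abel
  rw [fderiv_zeroInputResidual_apply hf0 hh0, eq_comm (a := x'), ← sub_eq_zero (b := x'),
    ← hstate, ← houtput]
  exact Prod.ext_iff

theorem A2holds.antilipschitzWith {σs : ℝ≥0} (hσs : 0 < σs) (hA2 : A2holds f0 h0 B D σs)
    (hf0 : Differentiable ℝ f0) (hh0 : Differentiable ℝ h0) (x : Fin n → ℝ) :
    AntilipschitzWith (σs⁻¹ * NNReal.sqrt (n + p))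
      ((fderiv ℝ (zeroInputResidual f0 h0) x).coprod (inputMap B D)) := by
  refine ContinuousLinearMap.antilipschitz_of_bound _ fun ⟨v, w⟩ => ?_
  rw [ContinuousLinearMap.coprod_apply, fderiv_zeroInputResidual_apply hf0 hh0, inputMap_apply]
  push_cast
  rw [mul_assoc, ← div_eq_inv_mul, le_div_iff₀' (NNReal.coe_pos.2 hσs)]
  calc σs * ‖(v, w)‖ ≤ σs * √(en v ^ 2 + en w ^ 2) := by grw [norm_prod_le_sqrt_en]
    _ ≤ √(en (jac f0 x *ᵥ v - v + B *ᵥ w) ^ 2 + en (jac h0 x *ᵥ v + D *ᵥ w) ^ 2) := hA2 x v w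
    _ ≤ _ := sqrt_en_le_mul_norm_prod _ _

end SteadyState

theorem stmt7_general {n m : ℕ} {f0 : (Fin n → ℝ) → Fin n → ℝ} {h0 : (Fin n → ℝ) → Fin m → ℝ}
    {B : Matrix (Fin n) (Fin m) ℝ} {D : Matrix (Fin m) (Fin m) ℝ}
    (hf0 : ContDiff ℝ 2 f0) (hh0 : ContDiff ℝ 2 h0)
    {σs : ℝ} (hσs : 0 < σs) (hA2 : A2holds f0 h0 B D σs) {yr : Fin m → ℝ}
    {xsr : Fin n → ℝ} {usr : Fin m → ℝ} (hxsr : xsr = fdyn f0 B xsr usr)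
    (hyr : hout h0 D xsr usr = yr) {X : Set (Fin n → ℝ)} (hX : Bornology.IsBounded X) :
    ∃ ceq1 ceq2 : ℝ, 0 < ceq1 ∧ 0 < ceq2 ∧ ∀ xh ∈ X, ∀ xlin ulin,
      xlin = flin f0 B xh xlin ulin → hlin h0 D xh xlin ulin = yr →
        ceq1 * en (xh - xlin) ^ 2 ≤ en (xh - xsr) ^ 2 ∧
        en (xh - xsr) ^ 2 ≤ ceq2 * en (xh - xlin) ^ 2 := by
  lift σs to ℝ≥0 using hσs.le
  have hf0' := hf0.differentiable two_ne_zero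
  have hh0' := hh0.differentiable two_ne_zero
  obtain ⟨C, hC⟩ := exists_newton_step_comparable_of_input (inputMap B D) (by simp)
    (contDiff_zeroInputResidual hf0 hh0) (hA2.antilipschitzWith (NNReal.coe_pos.1 hσs) hf0' hh0')
    (zeroInputResidual_add_inputMap_eq_iff.2 ⟨hxsr, hyr⟩) hX
  have hle : ∀ {a b : Fin n → ℝ}, ‖a‖ ≤ C * ‖b‖ → en a ^ 2 ≤ (n * C ^ 2 + 1) * en b ^ 2 :=
    fun {a b} h => by linarith [en_sq_le_of_norm_le h, sq_nonneg (en b)]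
  have hpos : (0 : ℝ) < n * C ^ 2 + 1 := by positivity
  refine ⟨(n * C ^ 2 + 1)⁻¹, n * C ^ 2 + 1, inv_pos.2 hpos, hpos,
    fun xh hxh xlin ulin hx hy => ?_⟩
  obtain ⟨hstep, herr⟩ :=
    hC xh hxh xlin ulin ((newton_step_eq_iff_linearized_steadyState hf0' hh0').2 ⟨hx, hy⟩)
  exact ⟨(inv_mul_le_iff₀ hpos).2 (hle hstep), hle herr⟩

/-- Proposition on sufficient conditions for Assumption 6 (`p = m`, reachable
setpoint): under (A2), (A4), (A5) and reachability (`yʳ` is the optimal reachable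
output of every linearization, with associated steady state
`(xˢʳ_lin(x̃), uˢʳ_lin(x̃))`), the distance of `x̂` to the optimal reachable steady
state `xˢʳ` of the nonlinear system is equivalent, on any compact `X ⊇` the
steady-state manifold, to the distance of `x̂` to `xˢʳ_lin(x̂)`. -/
theorem stmt7 {n m : ℕ} (f0 : (Fin n → ℝ) → Fin n → ℝ)
    (h0 : (Fin n → ℝ) → Fin m → ℝ)
    (B : Matrix (Fin n) (Fin m) ℝ) (D : Matrix (Fin m) (Fin m) ℝ)
    (U Us : Set (Fin m → ℝ))
    (hU : IsCompact U) (hUs : IsCompact Us) (hUsconv : Convex ℝ Us)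
    (hUsint : Us ⊆ interior U)
    (hf0 : ContDiff ℝ 2 f0) (hh0 : ContDiff ℝ 2 h0)
    (σs : ℝ) (hσs : 0 < σs) (hA2 : A2holds f0 h0 B D σs)
    (σl : ℝ) (hσl : 0 < σl) (hA4 : A4holds f0 σl)
    (𝓑 : Set ((Fin n → ℝ) × (Fin m → ℝ))) (h𝓑 : IsCompact 𝓑)
    (hA5 : ∀ xt : Fin n → ℝ, Zlin f0 B Us xt ⊆ 𝓑)
    (yr : Fin m → ℝ)
    -- reachability: for every linearization point the setpoint `yʳ` is an output
    -- steady state of the linearized dynamics, attained at `(xsrlin x̃, usrlin x̃)`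
    (xsrlin : (Fin n → ℝ) → Fin n → ℝ) (usrlin : (Fin n → ℝ) → Fin m → ℝ)
    (hreach : ∀ xt : Fin n → ℝ, (xsrlin xt, usrlin xt) ∈ Zlin f0 B Us xt ∧
      hlin h0 D xt (xsrlin xt) (usrlin xt) = yr)
    -- nonlinear optimal reachable steady state with output `yʳ`
    (xsr : Fin n → ℝ) (usr : Fin m → ℝ)
    (hxsr : (xsr, usr) ∈ Zs f0 B Us ∧ hout h0 D xsr usr = yr) :
    ∀ X : Set (Fin n → ℝ), IsCompact X → 𝓑 ⊆ Set.prod X U →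
      ∃ ceq1 ceq2 : ℝ, 0 < ceq1 ∧ 0 < ceq2 ∧
        ∀ xh ∈ X,
          ceq1 * en (xh - xsrlin xh) ^ 2 ≤ en (xh - xsr) ^ 2 ∧
          en (xh - xsr) ^ 2 ≤ ceq2 * en (xh - xsrlin xh) ^ 2 := by
  intro X hX _
  obtain ⟨c₁, c₂, hc₁, hc₂, h⟩ := stmt7_general hf0 hh0 hσs hA2 hxsr.1.2 hxsr.2 hX.isBounded
  exact ⟨c₁, c₂, hc₁, hc₂, fun xh hxh => h xh hxh _ _ (hreach xh).1.2 (hreach xh).2⟩
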